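/- For the Pinchuk map 𝒫 = (P, Q) : ℝ² → ℝ², the Jacobian determinant is strictly positive at every point: det J𝒫(x, y) > 0 for all (x, y) ∈ ℝ². -/

import Mathlib

open Filter Topology

noncomputable section

/-- `t = x·y − 1` -/
def tP (x y : ℝ) : ℝ := x * y - 1

/-- `h = t·(x·t + 1)` -/
def hP (x y : ℝ) : ℝ := tP x y * (x * tP x y + 1)

/-- `f = (x·t + 1)²·(t² + y)` -/
def fP (x y : ℝ) : ℝ := (x * tP x y + 1) ^ 2 * ((tP x y) ^ 2 + y)

/-- First component `P = f + h` of the Pinchuk map. -/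
def PP (x y : ℝ) : ℝ := fP x y + hP x y

/-- Second component `Q` of the Pinchuk map. -/
def QP (x y : ℝ) : ℝ :=
  -(tP x y) ^ 2 - 6 * tP x y * hP x y * (hP x y + 1) - 170 * fP x y * hP x y
    - 91 * (hP x y) ^ 2 - 195 * fP x y * (hP x y) ^ 2 - 69 * (hP x y) ^ 3
    - 75 * fP x y * (hP x y) ^ 3 - (75 / 4) * (hP x y) ^ 4

/-- The Pinchuk map `𝒫 = (P, Q) : ℝ² → ℝ²`. -/
def Pinchuk (z : ℝ × ℝ) : ℝ × ℝ := (PP z.1 z.2, QP z.1 z.2)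

/-- Determinant of the Jacobian matrix `J𝒫(x,y)` of the Pinchuk map at `(x, y)`. -/
def jacDetPinchuk (x y : ℝ) : ℝ :=
  deriv (fun u => PP u y) x * deriv (fun v => QP x v) y
    - deriv (fun v => PP x v) y * deriv (fun u => QP u y) x

/-- Chain rule for `Q`, given derivatives of `t`, `h`, `f`. -/
lemma hasDerivAt_Q_aux (t h f : ℝ → ℝ) (t' h' f' a : ℝ) (ht : HasDerivAt t t' a)
    (hh : HasDerivAt h h' a) (hf : HasDerivAt f f' a) :
    HasDerivAt (fun s => -(t s) ^ 2 - 6 * t s * h s * (h s + 1) - 170 * f s * h s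
      - 91 * (h s) ^ 2 - 195 * f s * (h s) ^ 2 - 69 * (h s) ^ 3
      - 75 * f s * (h s) ^ 3 - (75 / 4) * (h s) ^ 4)
      (t' * (-2 * t a - 6 * h a * (h a + 1))
        + h' * (-6 * t a * (2 * h a + 1) - 170 * f a - 182 * h a - 390 * f a * h a
          - 207 * h a ^ 2 - 225 * f a * h a ^ 2 - 75 * h a ^ 3)
        + f' * (-170 * h a - 195 * h a ^ 2 - 75 * h a ^ 3)) a := by
  have H := ((((((((ht.pow 2).neg.sub (((ht.const_mul 6).mul hh).mul (hh.add_const 1))).sub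
    ((hf.const_mul 170).mul hh)).sub ((hh.pow 2).const_mul 91)).sub
    ((hf.const_mul 195).mul (hh.pow 2))).sub ((hh.pow 3).const_mul 69)).sub
    ((hf.const_mul 75).mul (hh.pow 3))).sub ((hh.pow 4).const_mul (75 / 4)))
  refine H.congr_deriv ?_
  simp
  ring

lemma hasDerivAt_t_x (x y : ℝ) : HasDerivAt (fun u => tP u y) y x := by
  have H := ((hasDerivAt_id x).mul_const y).sub_const 1
  exact H.congr_deriv (by simp)

lemma hasDerivAt_t_y (x y : ℝ) : HasDerivAt (fun v => tP x v) x y := by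
  have H := ((hasDerivAt_id y).const_mul x).sub_const 1
  exact H.congr_deriv (by simp)

lemma hasDerivAt_h_x (x y : ℝ) : HasDerivAt (fun u => hP u y)
    (y * (x * tP x y + 1) + tP x y * (tP x y + x * y)) x := by
  have ht := hasDerivAt_t_x x y
  have H := ht.mul (((hasDerivAt_id x).mul ht).add_const 1)
  exact H.congr_deriv (by simp)

lemma hasDerivAt_h_y (x y : ℝ) : HasDerivAt (fun v => hP x v)
    (x * (x * tP x y + 1) + tP x y * (x * x)) y := by
  have ht := hasDerivAt_t_y x y
  have H := ht.mul ((ht.const_mul x).add_const 1)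
  exact H.congr_deriv (by simp)

lemma hasDerivAt_f_x (x y : ℝ) : HasDerivAt (fun u => fP u y)
    (2 * (x * tP x y + 1) * (tP x y + x * y) * (tP x y ^ 2 + y)
      + (x * tP x y + 1) ^ 2 * (2 * tP x y * y)) x := by
  have ht := hasDerivAt_t_x x y
  have H := ((((hasDerivAt_id x).mul ht).add_const 1).pow 2).mul ((ht.pow 2).add_const y)
  exact H.congr_deriv (by simp)

lemma hasDerivAt_f_y (x y : ℝ) : HasDerivAt (fun v => fP x v)
    (2 * (x * tP x y + 1) * (x * x) * (tP x y ^ 2 + y)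
      + (x * tP x y + 1) ^ 2 * (2 * tP x y * x + 1)) y := by
  have ht := hasDerivAt_t_y x y
  have H := (((ht.const_mul x).add_const 1).pow 2).mul ((ht.pow 2).add (hasDerivAt_id y))
  exact H.congr_deriv (by simp)

lemma jac_eq (x y : ℝ) : jacDetPinchuk x y =
    tP x y ^ 2 + (tP x y + fP x y * (13 + 15 * hP x y)) ^ 2 + fP x y ^ 2 := by
  have hPx : deriv (fun u => PP u y) x = _ :=
    ((hasDerivAt_f_x x y).add (hasDerivAt_h_x x y)).deriv
  have hPy : deriv (fun v => PP x v) y = _ :=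
    ((hasDerivAt_f_y x y).add (hasDerivAt_h_y x y)).deriv
  have hQx : deriv (fun u => QP u y) x = _ :=
    (hasDerivAt_Q_aux _ _ _ _ _ _ _ (hasDerivAt_t_x x y) (hasDerivAt_h_x x y)
      (hasDerivAt_f_x x y)).deriv
  have hQy : deriv (fun v => QP x v) y = _ :=
    (hasDerivAt_Q_aux _ _ _ _ _ _ _ (hasDerivAt_t_y x y) (hasDerivAt_h_y x y)
      (hasDerivAt_f_y x y)).deriv
  unfold jacDetPinchuk
  rw [hPx, hPy, hQx, hQy]
  simp only [fP, hP, tP]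
  ring

/-- the Jacobian determinant of the Pinchuk map is strictly positive
at every point of `ℝ²`. -/
theorem pinchuk_jacobian_pos (x y : ℝ) : 0 < jacDetPinchuk x y := by
  rw [jac_eq]
  by_cases ht : tP x y = 0
  · have hy : y ≠ 0 := by
      rintro rfl
      simp [tP] at ht
    have hf : fP x y = y := by simp [fP, ht]
    rw [hf]
    positivity
  · positivity
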